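/- arXiv:1104.5066 — 2 statements merged into one kernel-verified Lean document; each statement's English description precedes it below -/
import Mathlib

section
/- Let ν > 0 be real and δ ∈ ℝ, and set d := δ + i·πν/2. Define y₁ : ℂ∖{0} → ℂ by y₁(x) = ((3−2iν)²/(16ν²))·e^{−2id}·x^{−2iν} − (9−4ν²)/(8ν²) + ((3+2iν)²/(16ν²))·e^{2id}·x^{2iν}, where x^{±2iν} := exp(±2iν·Log x) with Log the principal branch of the complex logarithm. Then for all r ∈ ℝ and y > 0, writing x = r − iy, one has ‖y₁(x)‖² = ((9+4ν²)/(8ν²))²·[ (cosh(a)·cos(b) − (9−4ν²)/(9+4ν²))² + sinh(a)²·sin(b)² ], where a := ν·(π − 2·arccos(r/√(r²+y²))), b := ν·ln(r²+y²) + 2·(ψ + δ), and ψ := arccos(3/√(9+4ν²)). -/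
open Complex

/-- The `μ = −1` (quantum cohomology of `CP²`) leading term
`y₁(x) = ((3−2iν)²/(16ν²))e^{−2id}x^{−2iν} − (9−4ν²)/(8ν²) + ((3+2iν)²/(16ν²))e^{2id}x^{2iν}`,
with `x^{±2iν} = exp(±2iν·Log x)`, `Log` the principal branch. -/
noncomputable def y₁ (ν : ℝ) (d : ℂ) (x : ℂ) : ℂ :=
  (3 - 2*I*(ν:ℂ))^2 / (16*(ν:ℂ)^2) * Complex.exp (-(2*I*d)) *
      Complex.exp (-(2*I*(ν:ℂ)*Complex.log x))
    - (9 - 4*(ν:ℂ)^2) / (8*(ν:ℂ)^2)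
    + (3 + 2*I*(ν:ℂ))^2 / (16*(ν:ℂ)^2) * Complex.exp (2*I*d) *
        Complex.exp (2*I*(ν:ℂ)*Complex.log x)

/-! With `z = 3 + 2iν` and `u = d + ν Log x`, the two exponential terms of `y₁` are
`z² e^{2iu} / 16ν²` and `z̄² e^{-2iu} / 16ν²`. Absorbing the argument `ψ` of `z` into the exponent
turns `y₁` into an affine function, with real coefficients, of `cos (2(u + ψ))`, and the modulus of
a complex cosine minus a real number is explicit. -/

open ComplexConjugate in
theorem pow_mul_exp_mul_I_add_conj_pow_mul_exp_neg_mul_I (z w : ℂ) (n : ℕ) :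
    z ^ n * exp (w * I) + conj z ^ n * exp (-w * I) = 2 * ‖z‖ ^ n * cos (w + n * arg z) := by
  have hz : z ^ n = ‖z‖ ^ n * exp (n * arg z * I) := by
    rw [mul_assoc, exp_nat_mul, ← mul_pow, norm_mul_exp_arg_mul_I]
  have hconj : conj z ^ n = ‖z‖ ^ n * exp (-(n * arg z * I)) := by
    rw [← map_pow, hz, map_mul, map_pow, conj_ofReal, ← exp_conj]
    simp only [map_mul, map_natCast, conj_ofReal, conj_I, mul_neg]
  have hcos := two_cos (w + n * arg z)
  rw [add_mul, neg_add, add_mul, neg_mul (n * arg z : ℂ), exp_add, exp_add] at hcos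
  rw [hz, hconj]
  linear_combination -(‖z‖ : ℂ) ^ n * hcos

theorem norm_cos_sub_ofReal_sq (w : ℂ) (c : ℝ) :
    ‖cos w - c‖ ^ 2 = (Real.cosh w.im * Real.cos w.re - c) ^ 2
      + Real.sinh w.im ^ 2 * Real.sin w.re ^ 2 := by
  have hcos : cos w - c = ((Real.cosh w.im * Real.cos w.re - c : ℝ) : ℂ)
      + ((-(Real.sinh w.im * Real.sin w.re) : ℝ) : ℂ) * I := by
    rw [cos_eq]
    push_cast
    ring
  rw [hcos, Complex.sq_norm, normSq_add_mul_I]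
  ring

theorem norm_ofReal_sub_mul_I (r y : ℝ) : ‖(r - y * I : ℂ)‖ = √(r ^ 2 + y ^ 2) := by
  simpa [sub_eq_add_neg] using norm_add_mul_I r (-y)

theorem arg_ofReal_add_mul_I_of_pos (r : ℝ) {y : ℝ} (hy : 0 < y) :
    arg (r + y * I) = Real.arccos (r / √(r ^ 2 + y ^ 2)) := by
  rw [arg_of_im_pos (by simpa using hy), norm_add_mul_I]
  simp

theorem arg_ofReal_sub_mul_I_of_pos (r : ℝ) {y : ℝ} (hy : 0 < y) :
    arg (r - y * I) = -Real.arccos (r / √(r ^ 2 + y ^ 2)) := by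
  rw [arg_of_im_neg (by simpa using hy), norm_ofReal_sub_mul_I]
  simp

theorem arg_three_add_two_mul_I_mul {ν : ℝ} (hν : 0 < ν) :
    arg (3 + 2 * I * ν) = Real.arccos (3 / √(9 + 4 * ν ^ 2)) := by
  convert! arg_ofReal_add_mul_I_of_pos 3 (mul_pos two_pos hν) using 2
  · push_cast
    ring
  · ring_nf

open ComplexConjugate in
theorem three_add_sq_mul_exp_add_three_sub_sq_mul_exp_neg (ν : ℝ) (w : ℂ) :
    (3 + 2 * I * ν) ^ 2 * exp (w * I) + (3 - 2 * I * ν) ^ 2 * exp (-w * I)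
      = 2 * (9 + 4 * ν ^ 2) * cos (w + 2 * arg (3 + 2 * I * ν)) := by
  have hconj : conj (3 + 2 * I * ν : ℂ) = 3 - 2 * I * ν := by
    simp [sub_eq_add_neg, map_ofNat]
  have hnorm : (‖(3 + 2 * I * ν : ℂ)‖ : ℂ) ^ 2 = 9 + 4 * ν ^ 2 := by
    rw [← mul_conj', hconj]
    linear_combination -4 * (ν : ℂ) ^ 2 * I_sq
  simpa only [hconj, hnorm, Nat.cast_ofNat] using
    pow_mul_exp_mul_I_add_conj_pow_mul_exp_neg_mul_I (3 + 2 * I * ν) w 2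

theorem y₁_eq_mul_cos_sub {ν : ℝ} (hν : ν ≠ 0) (d x : ℂ) :
    y₁ ν d x = ((9 + 4 * ν ^ 2) / (8 * ν ^ 2) : ℝ) *
      (cos (2 * (d + ν * log x + arg (3 + 2 * I * ν)))
        - ((9 - 4 * ν ^ 2) / (9 + 4 * ν ^ 2) : ℝ)) := by
  have hν' : (ν : ℂ) ≠ 0 := ofReal_ne_zero.mpr hν
  have hsum : (9 + 4 * ν ^ 2 : ℂ) ≠ 0 := by
    exact_mod_cast (by positivity : (9 + 4 * ν ^ 2 : ℝ) ≠ 0)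
  have hexp : exp (2 * (d + ν * log x) * I) = exp (2 * I * d) * exp (2 * I * ν * log x) := by
    rw [← exp_add]
    ring_nf
  have hexp_neg : exp (-(2 * (d + ν * log x)) * I)
      = exp (-(2 * I * d)) * exp (-(2 * I * ν * log x)) := by
    rw [← exp_add]
    ring_nf
  calc y₁ ν d x = ((3 + 2 * I * ν) ^ 2 * exp (2 * (d + ν * log x) * I)
        + (3 - 2 * I * ν) ^ 2 * exp (-(2 * (d + ν * log x)) * I)) / (16 * ν ^ 2)
        - (9 - 4 * ν ^ 2) / (8 * ν ^ 2) := by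
        rw [hexp, hexp_neg, y₁]
        ring
    _ = 2 * (9 + 4 * ν ^ 2) * cos (2 * (d + ν * log x + arg (3 + 2 * I * ν))) / (16 * ν ^ 2)
        - (9 - 4 * ν ^ 2) / (8 * ν ^ 2) := by
        rw [three_add_sq_mul_exp_add_three_sub_sq_mul_exp_neg, ← mul_add]
    _ = _ := by
        push_cast
        field_simp
        ring

theorem stmt_15_general {ν : ℝ} (hν : ν ≠ 0) (d : ℂ) {x : ℂ} (_hx : x ≠ 0) {ψ a b : ℝ}
    (hψ : ψ = arg (3 + 2 * I * ν))
    (ha : a = 2 * (d.im + ν * arg x))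
    (hb : b = 2 * (d.re + ν * Real.log ‖x‖ + ψ)) :
    ‖y₁ ν d x‖ ^ 2 = ((9 + 4 * ν ^ 2) / (8 * ν ^ 2)) ^ 2 *
      ((Real.cosh a * Real.cos b - (9 - 4 * ν ^ 2) / (9 + 4 * ν ^ 2)) ^ 2
        + Real.sinh a ^ 2 * Real.sin b ^ 2) := by
  have him : (2 * (d + ν * log x + ψ)).im = a := by simp [ha, log_im]
  have hre : (2 * (d + ν * log x + ψ)).re = b := by simp [hb, log_re]
  rw [y₁_eq_mul_cos_sub hν, ← hψ, norm_mul, mul_pow, norm_real, Real.norm_eq_abs, sq_abs,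
    norm_cos_sub_ofReal_sq, him, hre]

/-- for `ν > 0`, `d = δ + iπν/2`, and `x = r − iy` with `y > 0`,
`‖y₁(x)‖² = ((9+4ν²)/(8ν²))²·[(cosh a·cos b − (9−4ν²)/(9+4ν²))² + sinh²a·sin²b]`
where `a = ν(π − 2arccos(r/√(r²+y²)))`, `b = ν·ln(r²+y²) + 2(ψ+δ)`,
`ψ = arccos(3/√(9+4ν²))`. -/
theorem stmt_15 (ν : ℝ) (hν : 0 < ν) (δ r y : ℝ) (hy : 0 < y)
    (ψ a b : ℝ)
    (hψ : ψ = Real.arccos (3 / Real.sqrt (9 + 4*ν^2)))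
    (ha : a = ν * (Real.pi - 2 * Real.arccos (r / Real.sqrt (r^2 + y^2))))
    (hb : b = ν * Real.log (r^2 + y^2) + 2*(ψ + δ)) :
    ‖y₁ ν ((δ:ℂ) + I * ((Real.pi:ℂ) * (ν:ℂ) / 2)) ((r:ℂ) - I*(y:ℂ))‖^2
      = ((9 + 4*ν^2)/(8*ν^2))^2 *
          ((Real.cosh a * Real.cos b - (9 - 4*ν^2)/(9 + 4*ν^2))^2
            + (Real.sinh a)^2 * (Real.sin b)^2) := by
  have hx : (r - y * I : ℂ) ≠ 0 := fun h ↦ hy.ne' (by simpa using congrArg im h)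
  have hd_re : (δ + I * (Real.pi * ν / 2) : ℂ).re = δ := by simp
  have hd_im : (δ + I * (Real.pi * ν / 2) : ℂ).im = Real.pi * ν / 2 := by simp
  rw [mul_comm I (y : ℂ)]
  refine stmt_15_general hν.ne' _ hx (hψ.trans (arg_three_add_two_mul_I_mul hν).symm) ?_ ?_
  · rw [ha, hd_im, arg_ofReal_sub_mul_I_of_pos r hy]
    ring
  · rw [hb, hd_re, norm_ofReal_sub_mul_I, Real.log_sqrt (by positivity)]
    ring
end

section
/- Let μ ∈ ℂ with μ − 1/2 ∉ ℤ, and let p₀₁, p_{x1} ∈ ℂ. For real ν > 0 define E(ν) := −(4·16^{2iν}·Γ(3/2 − μ − iν)²·Γ(μ + 1/2 − iν)²)/((2ν + i(1−2μ))²·ν²·sinh(2πν)²·Γ(−iν)⁴) · [ (1/2)·(e^{2πν}·p_{x1} − p₀₁)·sinh(2πν) + (cos(2πμ) + 1)·(e^{2πν} + 1) ], where Γ is the complex Gamma function and 16^{2iν} = exp(2iν·ln 16). Then E(ν) → 1 as ν → 0⁺, and ((i/2)·Log E(ν))/ν tends to d₁ := 2γ − 4·ln 2 + iπ/2 + 2·Γ'(μ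 + 1/2)/Γ(μ + 1/2) − π·tan(πμ) + iπ·(p_{x1} − p₀₁)/(8·cos²(πμ)) as ν → 0⁺, where Log is the principal branch of the complex logarithm, γ is the Euler–Mascheroni constant, and Γ'/Γ is the logarithmic derivative of the complex Gamma function. -/
open Complex

/-- The quantity whose principal logarithm gives the integration constant `d(ν)` in the
generic case: `E(ν) = −(4·16^{2iν}·Γ(3/2−μ−iν)²·Γ(μ+1/2−iν)²)/((2ν+i(1−2μ))²ν²·sinh(2πν)²·Γ(−iν)⁴)
· [(1/2)(e^{2πν}p_{x1} − p₀₁)sinh(2πν) + (cos(2πμ)+1)(e^{2πν}+1)]`. -/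
noncomputable def E (μ p01 px1 : ℂ) (ν : ℝ) : ℂ :=
  -(4 * Complex.exp (2*I*(ν:ℂ)*(Real.log 16 : ℂ)) *
      Complex.Gamma (3/2 - μ - I*(ν:ℂ))^2 * Complex.Gamma (μ + 1/2 - I*(ν:ℂ))^2) /
    ((2*(ν:ℂ) + I*(1 - 2*μ))^2 * (ν:ℂ)^2 *
      Complex.sinh (2*(Real.pi:ℂ)*(ν:ℂ))^2 * Complex.Gamma (-(I*(ν:ℂ)))^4) *
  ((1/2) * (Complex.exp (2*(Real.pi:ℂ)*(ν:ℂ)) * px1 - p01) * Complex.sinh (2*(Real.pi:ℂ)*(ν:ℂ))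
    + (Complex.cos (2*(Real.pi:ℂ)*μ) + 1) * (Complex.exp (2*(Real.pi:ℂ)*(ν:ℂ)) + 1))

/-!
The poles of the Gamma functions of `E` at `ν = 0` are removable. By the functional equation
`Γ(s + 1) = s Γ(s)` and the reflection formula at `2iν`, with `s = μ + 1/2`,
`E(ν) = 16^{2iν} · [Γ(1-s-iν) Γ(s-iν) Γ(1+2iν) Γ(1-2iν) / (2π Γ(1-iν)²)]² · B(ν)`,
where `B` is the bracket in `E`. The right-hand side is holomorphic near `ν = 0` with value `1`
there. Hence `Log E(ν) / ν` tends to its logarithmic derivative at `0`, a sum of digamma values in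
which the reflection formula replaces `ψ(1-s)` by `ψ(s)`.
-/

open Filter
open scoped Real Topology

section LogDeriv

variable {𝕜 : Type*} [NontriviallyNormedField 𝕜] {f g : 𝕜 → 𝕜} {a b c x : 𝕜}

/-- `f` is differentiable at `x` with logarithmic derivative `a`. It is encoded as `f' = f a`
rather than `f' / f = a`, so that the product rule needs no nonvanishing hypotheses; at a zero
of `f` it only says `f' = 0`, whatever `a` is. -/
def HasLogDerivAt (f : 𝕜 → 𝕜) (a x : 𝕜) : Prop :=
  HasDerivAt f (f x * a) x

namespace HasLogDerivAt

theorem congr_logDeriv (hf : HasLogDerivAt f a x) (h : a = b) : HasLogDerivAt f b x :=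
  h ▸ hf

theorem mul (hf : HasLogDerivAt f a x) (hg : HasLogDerivAt g b x) :
    HasLogDerivAt (fun z ↦ f z * g z) (a + b) x :=
  (HasDerivAt.mul hf hg).congr_deriv (by ring)

theorem inv (hf : HasLogDerivAt f a x) (hfx : f x ≠ 0) :
    HasLogDerivAt (fun z ↦ (f z)⁻¹) (-a) x :=
  (HasDerivAt.fun_inv hf hfx).congr_deriv (by field_simp)

theorem div (hf : HasLogDerivAt f a x) (hg : HasLogDerivAt g b x) (hgx : g x ≠ 0) :
    HasLogDerivAt (fun z ↦ f z / g z) (a - b) x := by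
  simpa only [div_eq_mul_inv, sub_eq_add_neg] using hf.mul (hg.inv hgx)

theorem const_mul (c : 𝕜) (hf : HasLogDerivAt f a x) : HasLogDerivAt (fun z ↦ c * f z) a x :=
  (HasDerivAt.const_mul c hf).congr_deriv (by ring)

theorem sq (hf : HasLogDerivAt f a x) : HasLogDerivAt (fun z ↦ f z ^ 2) (2 * a) x :=
  (HasDerivAt.pow hf 2).congr_deriv (by ring)

theorem comp_add_mul (k : 𝕜) (hf : HasLogDerivAt f a c) :
    HasLogDerivAt (fun z ↦ f (c + k * z)) (k * a) 0 := by
  have hfc : HasDerivAt f (f c * a) (c + k * 0) := by simpa [HasLogDerivAt] using hf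
  have haffine : HasDerivAt (fun z ↦ c + k * z) k 0 := by
    simpa using ((hasDerivAt_id (0 : 𝕜)).const_mul k).const_add c
  exact (hfc.comp 0 haffine).congr_deriv (by simp only [mul_zero, add_zero]; ring)

theorem comp_sub_mul (k : 𝕜) (hf : HasLogDerivAt f a c) :
    HasLogDerivAt (fun z ↦ f (c - k * z)) (-(k * a)) 0 := by
  simpa only [neg_mul, ← sub_eq_add_neg] using hf.comp_add_mul (-k)

theorem unique (hf : HasLogDerivAt f a x) (hf' : HasLogDerivAt f b x) (hfx : f x ≠ 0) : a = b :=
  mul_left_cancel₀ hfx (HasDerivAt.unique hf hf')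

end HasLogDerivAt

theorem HasLogDerivAt.tendsto_log_div {f : ℂ → ℂ} {a : ℂ} (hf : HasLogDerivAt f a 0)
    (hf0 : f 0 = 1) : Tendsto (fun z ↦ log (f z) / z) (𝓝[≠] 0) (𝓝 a) := by
  have hlog : HasDerivAt (fun z ↦ log (f z)) a 0 :=
    (HasDerivAt.clog hf (hf0 ▸ one_mem_slitPlane)).congr_deriv (by simp [hf0])
  refine hlog.tendsto_slope.congr fun z ↦ ?_
  simp only [slope_def_field, hf0, log_one, sub_zero]

end LogDeriv

section Gamma

theorem one_sub_mem_integerComplement {s : ℂ} (hs : s ∈ integerComplement) :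
    1 - s ∈ integerComplement := by
  rintro ⟨n, hn⟩
  exact hs ⟨1 - n, by push_cast; linear_combination -hn⟩

theorem ne_neg_natCast_of_mem_integerComplement {s : ℂ} (hs : s ∈ integerComplement) (m : ℕ) :
    s ≠ -m :=
  fun h ↦ hs ⟨-m, by simp [h]⟩

theorem hasLogDerivAt_Gamma {s : ℂ} (hs : ∀ m : ℕ, s ≠ -m) :
    HasLogDerivAt Gamma (digamma s) s := by
  refine (differentiableAt_Gamma s hs).hasDerivAt.congr_deriv ?_
  rw [digamma_def, logDeriv_apply, mul_div_cancel₀ _ (Gamma_ne_zero hs)]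

theorem hasLogDerivAt_Gamma_one : HasLogDerivAt Gamma (-Real.eulerMascheroniConstant) 1 := by
  simpa [HasLogDerivAt] using hasDerivAt_Gamma_one

theorem hasLogDerivAt_sin {s : ℂ} (hs : sin s ≠ 0) : HasLogDerivAt sin (cot s) s :=
  (hasDerivAt_sin s).congr_deriv (by rw [cot_eq_cos_div_sin, mul_div_cancel₀ _ hs])

theorem Gamma_one_add_mul_Gamma_one_sub {s : ℂ} (hs : s ≠ 0) :
    Gamma (1 + s) * Gamma (1 - s) = π * s / sin (π * s) := by
  rw [add_comm, Gamma_add_one s hs, mul_assoc, Gamma_mul_Gamma_one_sub]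
  ring

theorem digamma_one_sub {s : ℂ} (hs : s ∈ integerComplement) :
    digamma (1 - s) = digamma s + π * cot (π * s) := by
  have hsin : sin (π * s) ≠ 0 := sin_pi_mul_ne_zero hs
  have hπ : (π : ℂ) ≠ 0 := ofReal_ne_zero.mpr Real.pi_ne_zero
  have hΓs := hasLogDerivAt_Gamma (ne_neg_natCast_of_mem_integerComplement hs)
  have hΓ_one_sub := hasLogDerivAt_Gamma
    (ne_neg_natCast_of_mem_integerComplement (one_sub_mem_integerComplement hs))
  have hΓ := (hΓs.comp_add_mul 1).mul (hΓ_one_sub.comp_sub_mul 1)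
  have hcsc := (((hasLogDerivAt_sin hsin).comp_add_mul (π : ℂ)).inv
    (by rwa [mul_zero, add_zero])).const_mul (π : ℂ)
  have hreflection : (fun z ↦ Gamma (s + 1 * z) * Gamma (1 - s - 1 * z)) =
      fun z ↦ π * (sin (π * s + π * z))⁻¹ := by
    funext z
    rw [one_mul, sub_sub, Gamma_mul_Gamma_one_sub, mul_add, div_eq_mul_inv]
  rw [hreflection] at hΓ
  linear_combination -(hΓ.unique hcsc (by simp [hsin, hπ]))

end Gamma

section Connection

variable {s μ : ℂ}

/-- The Gamma quotient whose square is the regularised prefactor of `E`, where `s = μ + 1/2`. -/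
noncomputable def gammaFactor (s z : ℂ) : ℂ :=
  Gamma (1 - s - I * z) * Gamma (s - I * z) * (Gamma (1 + 2 * I * z) * Gamma (1 - 2 * I * z)) /
    (2 * π * Gamma (1 - I * z) ^ 2)

/-- The bracketed factor of `E`, which carries the monodromy data `p₀₁`, `p_{x1}`. -/
noncomputable def monodromyFactor (μ p01 px1 z : ℂ) : ℂ :=
  1 / 2 * (exp (2 * π * z) * px1 - p01) * sinh (2 * π * z) +
    (cos (2 * π * μ) + 1) * (exp (2 * π * z) + 1)

/-- The extension of `E` to a function holomorphic near `0`. -/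
noncomputable def regularizedE (μ p01 px1 z : ℂ) : ℂ :=
  gammaFactor (μ + 1 / 2) z ^ 2 * exp (2 * I * Real.log 16 * z) * monodromyFactor μ p01 px1 z

theorem gammaFactor_zero (s : ℂ) : gammaFactor s 0 = 1 / (2 * sin (π * s)) := by
  have hπ : (π : ℂ) ≠ 0 := ofReal_ne_zero.mpr Real.pi_ne_zero
  have hreflection := Gamma_mul_Gamma_one_sub s
  simp only [gammaFactor, mul_zero, sub_zero, add_zero, Gamma_one, mul_one, one_pow]
  rw [mul_comm (Gamma (1 - s)), hreflection]
  field_simp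

theorem hasLogDerivAt_gammaFactor (hs : s ∈ integerComplement) :
    HasLogDerivAt (gammaFactor s)
      (-I * (2 * digamma s + π * cot (π * s) + 2 * Real.eulerMascheroniConstant)) 0 := by
  have hΓs := hasLogDerivAt_Gamma (ne_neg_natCast_of_mem_integerComplement hs)
  have hΓ_one_sub := hasLogDerivAt_Gamma
    (ne_neg_natCast_of_mem_integerComplement (one_sub_mem_integerComplement hs))
  have hΓ_one := hasLogDerivAt_Gamma_one
  have hnum := ((hΓ_one_sub.comp_sub_mul I).mul (hΓs.comp_sub_mul I)).mul
    ((hΓ_one.comp_add_mul (2 * I)).mul (hΓ_one.comp_sub_mul (2 * I)))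
  have hden := (hΓ_one.comp_sub_mul I).sq.const_mul (2 * (π : ℂ))
  refine (hnum.div hden (by simp [Real.pi_ne_zero])).congr_logDeriv ?_
  rw [digamma_one_sub hs]
  ring

theorem cos_two_pi_mul_add_one (μ : ℂ) : cos (2 * π * μ) + 1 = 2 * cos (π * μ) ^ 2 := by
  rw [mul_assoc, cos_two_mul]
  ring

theorem monodromyFactor_zero (μ p01 px1 : ℂ) :
    monodromyFactor μ p01 px1 0 = 4 * cos (π * μ) ^ 2 := by
  simp only [monodromyFactor, mul_zero, sinh_zero, exp_zero, cos_two_pi_mul_add_one]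
  ring

theorem hasLogDerivAt_monodromyFactor (hμ : cos (π * μ) ≠ 0) (p01 px1 : ℂ) :
    HasLogDerivAt (monodromyFactor μ p01 px1)
      (π + π * (px1 - p01) / (4 * cos (π * μ) ^ 2)) 0 := by
  have hlinear : HasDerivAt (fun z : ℂ ↦ 2 * π * z) (2 * π) 0 := by
    simpa using (hasDerivAt_id (0 : ℂ)).const_mul (2 * (π : ℂ))
  have hderiv := ((((hlinear.cexp.mul_const px1).sub_const p01).const_mul (1 / 2)).mul
    hlinear.csinh).add ((hlinear.cexp.add_const 1).const_mul (cos (2 * π * μ) + 1))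
  refine hderiv.congr_deriv ?_
  rw [monodromyFactor_zero, cos_two_pi_mul_add_one]
  simp only [mul_zero, sinh_zero, cosh_zero, exp_zero]
  field_simp
  ring

theorem sin_pi_mul_add_half (μ : ℂ) : sin (π * (μ + 1 / 2)) = cos (π * μ) := by
  rw [← sin_add_pi_div_two]
  ring_nf

theorem cot_pi_mul_add_half (μ : ℂ) : cot (π * (μ + 1 / 2)) = -tan (π * μ) := by
  rw [show π * (μ + 1 / 2) = π * μ + π / 2 by ring, cot_eq_cos_div_sin, cos_add_pi_div_two,
    sin_add_pi_div_two, neg_div, tan_eq_sin_div_cos]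

theorem cos_pi_mul_ne_zero (hμ : μ + 1 / 2 ∈ integerComplement) : cos (π * μ) ≠ 0 :=
  sin_pi_mul_add_half μ ▸ sin_pi_mul_ne_zero hμ

theorem regularizedE_zero (hμ : μ + 1 / 2 ∈ integerComplement) (p01 px1 : ℂ) :
    regularizedE μ p01 px1 0 = 1 := by
  have hcos := cos_pi_mul_ne_zero hμ
  rw [regularizedE, gammaFactor_zero, sin_pi_mul_add_half, monodromyFactor_zero, mul_zero, exp_zero]
  field_simp
  norm_num

theorem hasLogDerivAt_regularizedE (hμ : μ + 1 / 2 ∈ integerComplement) (p01 px1 : ℂ) :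
    HasLogDerivAt (regularizedE μ p01 px1)
      (-2 * I * (2 * digamma (μ + 1 / 2) - π * tan (π * μ) + 2 * Real.eulerMascheroniConstant) +
        2 * I * Real.log 16 + (π + π * (px1 - p01) / (4 * cos (π * μ) ^ 2))) 0 := by
  have hexp : HasLogDerivAt exp 1 0 := by simpa [HasLogDerivAt] using hasDerivAt_exp 0
  have hpower : HasLogDerivAt (fun z ↦ exp (2 * I * Real.log 16 * z))
      (2 * I * Real.log 16) 0 := by
    simpa using hexp.comp_add_mul (2 * I * Real.log 16)
  refine (((hasLogDerivAt_gammaFactor hμ).sq.mul hpower).mul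
    (hasLogDerivAt_monodromyFactor (cos_pi_mul_ne_zero hμ) p01 px1)).congr_logDeriv ?_
  rw [cot_pi_mul_add_half]
  ring

theorem Gamma_one_add_two_I_mul_mul_Gamma_one_sub_two_I_mul {z : ℂ} (hz : z ≠ 0) :
    Gamma (1 + 2 * I * z) * Gamma (1 - 2 * I * z) = 2 * π * z / sinh (2 * π * z) := by
  have hsin : sin (π * (2 * I * z)) = sinh (2 * π * z) * I := by
    rw [← sin_mul_I]
    ring_nf
  rw [Gamma_one_add_mul_Gamma_one_sub (by simp [hz]), hsin,
    show π * (2 * I * z) = 2 * π * z * I by ring, mul_div_mul_right _ _ I_ne_zero]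

theorem E_eq_regularizedE {ν : ℝ} (p01 px1 : ℂ) (hν : ν ≠ 0) (hμ : 1 / 2 - μ - I * ν ≠ 0) :
    E μ p01 px1 ν = regularizedE μ p01 px1 ν := by
  have hν' : (ν : ℂ) ≠ 0 := ofReal_ne_zero.mpr hν
  have hΓμ : Gamma (3 / 2 - μ - I * ν) =
      (1 / 2 - μ - I * ν) * Gamma (1 - (μ + 1 / 2) - I * ν) := by
    rw [show 1 - (μ + 1 / 2) - I * ν = 1 / 2 - μ - I * ν by ring, ← Gamma_add_one _ hμ]
    ring_nf
  have hΓν : Gamma (1 - I * ν) = -(I * ν) * Gamma (-(I * ν)) := by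
    rw [← Gamma_add_one _ (by simp [hν])]
    ring_nf
  have hlinear : 2 * (ν : ℂ) + I * (1 - 2 * μ) = 2 * I * (1 / 2 - μ - I * ν) := by
    linear_combination 2 * (ν : ℂ) * I_sq
  rw [E, regularizedE, gammaFactor, monodromyFactor,
    Gamma_one_add_two_I_mul_mul_Gamma_one_sub_two_I_mul hν', hΓμ, hΓν, hlinear,
    mul_right_comm (2 * I)]
  congr 1
  generalize 1 / 2 - μ - I * ν = w at hμ ⊢
  generalize Gamma (-(I * ν)) = Γν
  field_simp
  rw [I_sq]
  ring

theorem eventually_E_eq_regularizedE (hμ : μ ≠ 1 / 2) (p01 px1 : ℂ) :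
    ∀ᶠ ν : ℝ in 𝓝[≠] 0, E μ p01 px1 ν = regularizedE μ p01 px1 ν := by
  have hcont : ContinuousAt (fun ν : ℝ ↦ 1 / 2 - μ - I * ν) 0 := by fun_prop
  have hne : ∀ᶠ ν : ℝ in 𝓝 0, 1 / 2 - μ - I * ν ≠ 0 :=
    hcont.eventually_ne (by simpa [sub_eq_zero] using hμ.symm)
  filter_upwards [self_mem_nhdsWithin, hne.filter_mono nhdsWithin_le_nhds] with ν hν hν'
  exact E_eq_regularizedE p01 px1 hν hν'

end Connection

theorem stmt_16_general (μ : ℂ) (hμ : ¬ ∃ m : ℤ, μ - 1 / 2 = m) (p01 px1 : ℂ) :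
    Tendsto (E μ p01 px1) (𝓝[≠] 0) (𝓝 1) ∧
    Tendsto (fun ν : ℝ ↦ I / 2 * log (E μ p01 px1 ν) / ν) (𝓝[≠] 0)
      (𝓝 (2 * Real.eulerMascheroniConstant - 4 * Real.log 2 + I * π / 2
        + 2 * deriv Gamma (μ + 1 / 2) / Gamma (μ + 1 / 2) - π * tan (π * μ)
        + I * π * (px1 - p01) / (8 * cos (π * μ) ^ 2))) := by
  have hs : μ + 1 / 2 ∈ integerComplement := by
    rintro ⟨m, hm⟩
    exact hμ ⟨m - 1, by push_cast; linear_combination -hm⟩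
  have hE := eventually_E_eq_regularizedE (fun h ↦ hμ ⟨0, by simpa [sub_eq_zero] using h⟩) p01 px1
  have hreg := hasLogDerivAt_regularizedE hs p01 px1
  have hreg0 := regularizedE_zero hs p01 px1
  have hofReal : Tendsto ((↑) : ℝ → ℂ) (𝓝[≠] 0) (𝓝[≠] 0) := by
    simpa using continuous_ofReal.continuousWithinAt.tendsto_nhdsWithin
      (x := 0) (s := {0}ᶜ) (t := {0}ᶜ) fun _ ↦ by simp
  constructor
  · have hlim := hreg.continuousAt.tendsto.comp (tendsto_nhds_of_tendsto_nhdsWithin hofReal)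
    rw [hreg0] at hlim
    exact hlim.congr' (hE.mono fun ν h ↦ h.symm)
  · have hlim := ((hreg.tendsto_log_div hreg0).comp hofReal).const_mul (I / 2)
    have hlog : (Real.log 16 : ℂ) = 4 * Real.log 2 := by
      rw [show (16 : ℝ) = 2 ^ 4 by norm_num, Real.log_pow]
      push_cast
      ring
    convert hlim.congr' (hE.mono fun ν h ↦ ?_) using 2
    · rw [hlog, digamma_def, logDeriv_apply]
      linear_combination (2 * (deriv Gamma (μ + 1 / 2) / Gamma (μ + 1 / 2)) - π * tan (π * μ) +
        2 * Real.eulerMascheroniConstant - 4 * Real.log 2) * I_sq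
    · simp only [Function.comp, h]
      ring

/-- for `μ − 1/2 ∉ ℤ`, `E(ν) → 1` as `ν → 0⁺`, and
`((i/2)·Log E(ν))/ν → d₁ = 2γ − 4ln2 + iπ/2 + 2Γ'(μ+1/2)/Γ(μ+1/2) − π·tan(πμ)
+ iπ(p_{x1} − p₀₁)/(8cos²(πμ))`. -/
theorem stmt_16 (μ : ℂ) (hμ : ¬ ∃ m : ℤ, μ - 1/2 = (m:ℂ)) (p01 px1 : ℂ) :
    Filter.Tendsto (fun ν : ℝ => E μ p01 px1 ν) (nhdsWithin 0 (Set.Ioi 0)) (nhds 1) ∧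
    Filter.Tendsto (fun ν : ℝ => ((I/2) * Complex.log (E μ p01 px1 ν)) / (ν:ℂ))
      (nhdsWithin 0 (Set.Ioi 0))
      (nhds (2*(Real.eulerMascheroniConstant : ℂ) - 4*(Real.log 2 : ℂ) + I*(Real.pi:ℂ)/2
        + 2 * deriv Complex.Gamma (μ + 1/2) / Complex.Gamma (μ + 1/2)
        - (Real.pi:ℂ) * Complex.tan ((Real.pi:ℂ)*μ)
        + I*(Real.pi:ℂ)*(px1 - p01) / (8 * Complex.cos ((Real.pi:ℂ)*μ)^2))) := by
  exact (stmt_16_general μ hμ p01 px1).imp (·.mono_left (nhdsGT_le_nhdsNE 0))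
    (·.mono_left (nhdsGT_le_nhdsNE 0))
end
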